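/- Let p₁ be any element of ℂ(t,M) and set b₀ = −(a₀(t,t²M) − a₁(t,t²M)·p₁)/(a₁(t,M)·a₁(t,t²M)) ∈ ℂ(t,M). Then b₀(t,M⁻¹) = −b₀(t,M) holds if and only if (M⁸t¹⁴ − M⁴t¹⁰)·p₁(t,M) − (M⁸t¹⁰ − M⁴t¹⁴)·p₁(t,M⁻¹) = 1 + M¹² − M²t⁴ − M⁴t⁴ − M⁸t⁴ − M¹⁰t⁴ − M⁴t⁸ − M⁸t⁸ + M⁴t¹⁶ + M⁸t¹⁶ + M²t²⁰ + M⁴t²⁰ + M⁸t²⁰ + M¹⁰t²⁰ − t²⁴ − M¹²t²⁴. -/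

import Mathlib

/-!
Write `a = a₁(t,M)`, `c = a₁(t,t²M)`, `q = a₀(t,t²M)` and let `σ` be the inversion `M ↦ M⁻¹`. Since
`σ a = -c` and `σ c = -a`, the denominator `a c` of `b₀` is fixed by `σ`, so `b₀` is antisymmetric
exactly when its numerator `q - c p₁` is, that is, when `c p₁ - a σ(p₁) = q + σ(q)`. The stated
equation is this one multiplied by the unit `t¹²M⁶`.
-/

noncomputable section

/-- The Laurent polynomial ring `ℂ[t^{±1}, M^{±1}]`, realized as the group algebra of `ℤ × ℤ`
over `ℂ`.  The element `mon a b` below is the monomial `t^a * M^b`. -/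
abbrev R2 : Type := AddMonoidAlgebra ℂ (ℤ × ℤ)

instance : IsDomain R2 := NoZeroDivisors.to_isDomain _

/-- The monomial `t^a * M^b` in `ℂ[t^{±1}, M^{±1}]`. -/
def mon (a b : ℤ) : R2 := AddMonoidAlgebra.single (a, b) (1 : ℂ)
/-- The exponent map corresponding to the substitution `(t, M) ↦ (t, t²M)`. -/
def eU : (ℤ × ℤ) ≃+ (ℤ × ℤ) where
  toFun p := (p.1 + 2 * p.2, p.2)
  invFun p := (p.1 - 2 * p.2, p.2)
  left_inv p := by ext <;> simp
  right_inv p := by ext <;> simp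
  map_add' p q := by ext <;> simp <;> ring

/-- The exponent map corresponding to the substitution `(t, M) ↦ (t, t⁻²M)`. -/
def eD : (ℤ × ℤ) ≃+ (ℤ × ℤ) where
  toFun p := (p.1 - 2 * p.2, p.2)
  invFun p := (p.1 + 2 * p.2, p.2)
  left_inv p := by ext <;> simp
  right_inv p := by ext <;> simp
  map_add' p q := by ext <;> simp <;> ring

/-- The exponent map corresponding to the substitution `(t, M) ↦ (t, M⁻¹)`. -/
def eI : (ℤ × ℤ) ≃+ (ℤ × ℤ) where
  toFun p := (p.1, -p.2)
  invFun p := (p.1, -p.2)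
  left_inv p := by ext <;> simp
  right_inv p := by ext <;> simp
  map_add' p q := by ext <;> simp <;> ring

/-- The substitution automorphism `F(t, M) ↦ F(t, t²M)` of `ℂ[t^{±1}, M^{±1}]`. -/
def sU : R2 ≃ₐ[ℂ] R2 := AddMonoidAlgebra.domCongr ℂ ℂ eU

/-- The substitution automorphism `F(t, M) ↦ F(t, t⁻²M)` of `ℂ[t^{±1}, M^{±1}]`. -/
def sD : R2 ≃ₐ[ℂ] R2 := AddMonoidAlgebra.domCongr ℂ ℂ eD

/-- The substitution automorphism `F(t, M) ↦ F(t, M⁻¹)` of `ℂ[t^{±1}, M^{±1}]`. -/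
def sI : R2 ≃ₐ[ℂ] R2 := AddMonoidAlgebra.domCongr ℂ ℂ eI
/-- `a₁(t,M) = t⁻²M² − t²M⁻²`. -/
def a1 : R2 := mon (-2) 2 - mon 2 (-2)

/-- `a₋₁(t,M) = t²M² − t⁻²M⁻²`. -/
def am1 : R2 := mon 2 2 - mon (-2) (-2)

/-- `a₀(t,M) = (M² − M⁻²)(−M⁴ − M⁻⁴ + M² + M⁻² + t⁴ + t⁻⁴)`. -/
def a0 : R2 :=
  (mon 0 2 - mon 0 (-2)) *
    (-(mon 0 4) - mon 0 (-4) + mon 0 2 + mon 0 (-2) + mon 4 0 + mon (-4) 0)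

/-- `A₁(t,M) = −a₁(t,M)·a₁(t,t²M)·a₋₁(t,t⁻²M)`. -/
def A1 : R2 := -(a1 * sU a1 * sD am1)

/-- `B₁(t,M) = a₀(t,M)·a₁(t,t²M)·a₋₁(t,t⁻²M)`. -/
def B1 : R2 := a0 * sU a1 * sD am1

/-- `C₁(t,M) = −a₁(t,M)·a₁(t,t⁻²M)·a₁(t,t²M) + a₀(t,M)·a₀(t,t²M)·a₋₁(t,t⁻²M)
    − a₁(t,M)·a₋₁(t,t⁻²M)·a₋₁(t,t²M)`. -/
def C1 : R2 := -(a1 * sD a1 * sU a1) + a0 * sU a0 * sD am1 - a1 * sD am1 * sU am1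
/-- The fraction field `ℂ(t, M)` of the Laurent polynomial ring `ℂ[t^{±1}, M^{±1}]`. -/
abbrev K2 : Type := FractionRing R2

/-- The canonical inclusion `ℂ[t^{±1}, M^{±1}] → ℂ(t, M)`. -/
def ι : R2 →+* K2 := algebraMap R2 K2

/-- The substitution automorphism of `ℂ(t,M)` fixing `t` and sending `M` to `M⁻¹`. -/
def σI : K2 ≃+* K2 := IsFractionRing.ringEquivOfRingEquiv (sI : R2 ≃+* R2)
/-- The right-hand side
`1 + M¹² − M²t⁴ − M⁴t⁴ − M⁸t⁴ − M¹⁰t⁴ − M⁴t⁸ − M⁸t⁸ + M⁴t¹⁶ + M⁸t¹⁶ + M²t²⁰ + M⁴t²⁰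
+ M⁸t²⁰ + M¹⁰t²⁰ − t²⁴ − M¹²t²⁴`. -/
def rhs13 : R2 :=
  1 + mon 0 12 - mon 4 2 - mon 4 4 - mon 4 8 - mon 4 10 - mon 8 4 - mon 8 8
    + mon 16 4 + mon 16 8 + mon 20 2 + mon 20 4 + mon 20 8 + mon 20 10
    - mon 24 0 - mon 24 12

lemma map_div_eq_neg_iff_of_map_eq {F K : Type*} [DivisionRing K] [FunLike F K K]
    [MonoidWithZeroHomClass F K K] (σ : F) {d : K} (hd : d ≠ 0) (hσd : σ d = d) (x : K) :
    σ (x / d) = -(x / d) ↔ σ x = -x := by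
  rw [map_div₀, hσd, ← neg_div, div_left_inj' hd]

lemma map_sub_mul_eq_neg_iff_of_map_eq_neg {F R : Type*} [Ring R] [FunLike F R R]
    [RingHomClass F R R] (σ : F) {a c : R} (hσc : σ c = -a) (p q : R) :
    σ (q - c * p) = -(q - c * p) ↔ c * p - a * σ p = q + σ q := by
  rw [map_sub, map_mul, hσc, neg_mul, sub_neg_eq_add, neg_sub, eq_sub_iff_add_eq,
    sub_eq_iff_eq_add, eq_comm, add_comm _ q, ← add_assoc]

lemma mon_mul_mon (a b c d : ℤ) : mon a b * mon c d = mon (a + c) (b + d) := by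
  simp [mon, AddMonoidAlgebra.single_mul_single]

lemma mon_zero_zero : mon 0 0 = 1 := rfl

lemma mon_inj {a b c d : ℤ} : mon a b = mon c d ↔ a = c ∧ b = d :=
  (AddMonoidAlgebra.single_left_inj one_ne_zero).trans Prod.mk_inj

lemma isUnit_mon (a b : ℤ) : IsUnit (mon a b) :=
  .of_mul_eq_one (mon (-a) (-b)) <| by
    rw [mon_mul_mon, add_neg_cancel, add_neg_cancel, mon_zero_zero]

lemma sU_mon (a b : ℤ) : sU (mon a b) = mon (a + 2 * b) b := by
  simp [sU, mon, eU]

lemma sI_mon (a b : ℤ) : sI (mon a b) = mon a (-b) := by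
  simp [sI, mon, eI]

lemma ι_injective : Function.Injective ι := IsFractionRing.injective R2 K2

lemma σI_ι (x : R2) : σI (ι x) = ι (sI x) :=
  IsFractionRing.ringEquivOfRingEquiv_algebraMap _ x

lemma a1_ne_zero : a1 ≠ 0 := by
  simp [a1, sub_eq_zero, mon_inj]

lemma sU_a1 : sU a1 = mon 2 2 - mon (-2) (-2) := by
  simp [a1, sU_mon]

lemma sI_a1 : sI a1 = -sU a1 := by
  simp [a1, sI_mon, sU_mon]

lemma sI_sU_a1 : sI (sU a1) = -a1 := by
  simp [a1, sI_mon, sU_mon]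

lemma sU_a0 :
    sU a0 = (mon 4 2 - mon (-4) (-2)) *
      (-mon 8 4 - mon (-8) (-4) + mon 4 2 + mon (-4) (-2) + mon 4 0 + mon (-4) 0) := by
  simp [a0, sU_mon]

lemma sI_sU_a0 :
    sI (sU a0) = (mon 4 (-2) - mon (-4) 2) *
      (-mon 8 (-4) - mon (-8) 4 + mon 4 (-2) + mon (-4) 2 + mon 4 0 + mon (-4) 0) := by
  simp [sU_a0, sI_mon]

lemma mon_mul_sU_a1 : mon 12 6 * sU a1 = mon 14 8 - mon 10 4 := by
  simp [sU_a1, mul_sub, mon_mul_mon]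

lemma mon_mul_a1 : mon 12 6 * a1 = mon 10 8 - mon 14 4 := by
  simp [a1, mul_sub, mon_mul_mon]

lemma mon_mul_sU_a0_add_sI_sU_a0 : mon 12 6 * (sU a0 + sI (sU a0)) = rhs13 := by
  rw [sI_sU_a0, sU_a0, rhs13, ← mon_zero_zero]
  simp only [mul_add, mul_sub, sub_mul, mul_neg, mon_mul_mon, Int.reduceAdd, Int.reduceNeg]
  abel

lemma σI_ι_a1_mul_ι_sU_a1 : σI (ι a1 * ι (sU a1)) = ι a1 * ι (sU a1) := by
  rw [map_mul, σI_ι, σI_ι, sI_a1, sI_sU_a1, map_neg, map_neg, neg_mul_neg, mul_comm]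

/-- With `b₀ = −(a₀(t,t²M) − a₁(t,t²M)p₁)/(a₁(t,M)a₁(t,t²M))`, the condition
`b₀(t,M⁻¹) = −b₀(t,M)` is equivalent to the stated functional equation for `p₁`. -/
theorem b0_antisymmetric_iff (p1 b0 : K2)
    (hb0 : b0 = -((ι (sU a0) - ι (sU a1) * p1) / (ι a1 * ι (sU a1)))) :
    σI b0 = -b0 ↔
      ι (mon 14 8 - mon 10 4) * p1 - ι (mon 10 8 - mon 14 4) * σI p1 = ι rhs13 := by
  have hden : ι a1 * ι (sU a1) ≠ 0 := by
    rw [← map_mul, map_ne_zero_iff ι ι_injective]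
    exact mul_ne_zero a1_ne_zero (sU.map_ne_zero_iff.mpr a1_ne_zero)
  have hunit : ι (mon 12 6) ≠ 0 := ((isUnit_mon 12 6).map ι).ne_zero
  have hσc : σI (ι (sU a1)) = -ι a1 := by rw [σI_ι, sI_sU_a1, map_neg]
  calc
    σI b0 = -b0 ↔ σI (ι (sU a0) - ι (sU a1) * p1) = -(ι (sU a0) - ι (sU a1) * p1) := by
      rw [hb0, map_neg, neg_inj, map_div_eq_neg_iff_of_map_eq σI hden σI_ι_a1_mul_ι_sU_a1]
    _ ↔ ι (sU a1) * p1 - ι a1 * σI p1 = ι (sU a0 + sI (sU a0)) := by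
      rw [map_sub_mul_eq_neg_iff_of_map_eq_neg σI hσc, σI_ι, map_add]
    _ ↔ ι (mon 14 8 - mon 10 4) * p1 - ι (mon 10 8 - mon 14 4) * σI p1 = ι rhs13 := by
      rw [← mul_right_inj' hunit, mul_sub, ← mul_assoc, ← mul_assoc, ← map_mul, ← map_mul,
        ← map_mul, mon_mul_sU_a1, mon_mul_a1, mon_mul_sU_a0_add_sI_sU_a0]
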